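/- Let k be a positive integer with 8 ∣ k and set k̄ = k+2. Then the number of quadruples (v,z,x,y) of integers with 1 ≤ v ≤ k̄, v ∣ k̄, k̄ ∣ v², 1 ≤ z ≤ v²/k̄, z ≡ k/8 (mod 2), v² ∣ 2k̄(4z²−1), and x, y ∈ {1,3}, equals 2·d(k̄), where d(m) denotes the number of positive divisors of m. -/

import Mathlib

/-!
Write `k + 2 = 2n` with `n` odd. The admissible `v` are the `2w` with `w ∣ n ∣ w²`, and for
`c = w² / n` the conditions on `z` become `1 ≤ z ≤ 2c`, a prescribed parity, and
`c ∣ (2z - 1)(2z + 1)`. The two factors are coprime, so such a `z` splits `c` into coprime factors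
`gcd(c, 2z - 1)` and `gcd(c, 2z + 1)`, and by the Chinese remainder theorem every splitting arises
from exactly one `z`. On the other side, a factorization `n = d e` with `lcm(d, e) = w` is
`gcd(d, e)` times a splitting of `c` into coprime factors. Summing over `w` counts the divisors
of `n`, half as many as those of `2n`; the pairs `(x, y)` contribute a factor `4`.
-/

open Finset

/-- The ordered factorizations of `n` into two coprime factors, whose components are the unitary
divisors of `n`; they parametrize the solutions of `4 * z ^ 2 ≡ 1` modulo an odd `n`. Empty for
`n = 0`, as for `Nat.divisorsAntidiagonal`. -/
def coprimeFactorizations (n : ℕ) : Finset (ℕ × ℕ) :=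
  {p ∈ n.divisorsAntidiagonal | p.1.Coprime p.2}

/-- The labels `z` attached to `v = 2 * w` when `w ^ 2 = n * c` and `k + 2 = 2 * n`: the
representatives in `[1, 2 * c]` of the solutions of `4 * z ^ 2 ≡ 1` modulo `c` having the parity
of `r`. -/
def halfUnitRoots (c r : ℕ) : Finset ℕ :=
  {z ∈ Icc 1 (2 * c) | z ≡ r [MOD 2] ∧ c ∣ 4 * z ^ 2 - 1}

theorem mem_coprimeFactorizations {n : ℕ} {p : ℕ × ℕ} :
    p ∈ coprimeFactorizations n ↔ (p.1 * p.2 = n ∧ n ≠ 0) ∧ p.1.Coprime p.2 := by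
  rw [coprimeFactorizations, mem_filter, Nat.mem_divisorsAntidiagonal]

theorem mem_halfUnitRoots {c r z : ℕ} :
    z ∈ halfUnitRoots c r ↔ z ∈ Icc 1 (2 * c) ∧ z ≡ r [MOD 2] ∧ c ∣ 4 * z ^ 2 - 1 := by
  rw [halfUnitRoots, mem_filter]

section FactorizationsByLcm

theorem lcm_mul_mul_of_coprime (g : ℕ) {a b : ℕ} (h : a.Coprime b) :
    (g * a).lcm (g * b) = g * (a * b) := by
  rw [Nat.lcm_mul_left, h.lcm_eq_mul]

theorem card_divisorsAntidiagonal_lcm_eq {g c : ℕ} (hg : 0 < g) :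
    #{p ∈ (g * (g * c)).divisorsAntidiagonal | p.1.lcm p.2 = g * c} =
      #(coprimeFactorizations c) := by
  symm
  refine card_nbij (fun p ↦ (g * p.1, g * p.2)) ?_ ?_ ?_
  · rintro ⟨a, b⟩ hab
    obtain ⟨⟨rfl, hc⟩, hcop⟩ := mem_coprimeFactorizations.mp hab
    rw [mem_coe, mem_filter, Nat.mem_divisorsAntidiagonal]
    exact ⟨⟨by ring, by positivity⟩, lcm_mul_mul_of_coprime g hcop⟩
  · rintro ⟨a, b⟩ - ⟨a', b'⟩ - h
    simpa [hg.ne'] using h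
  · rintro ⟨d, e⟩ hde
    rw [mem_coe, mem_filter, Nat.mem_divisorsAntidiagonal] at hde
    obtain ⟨⟨hmul, hne⟩, hlcm⟩ := hde
    have hgc : 0 < g * c := Nat.pos_of_ne_zero (right_ne_zero_of_mul hne)
    have hgcd : d.gcd e = g := by
      refine Nat.eq_of_mul_eq_mul_right hgc ?_
      rw [← hmul, ← hlcm, Nat.gcd_mul_lcm]
    obtain ⟨a, b, hcop, ha, hb⟩ := Nat.exists_coprime d e
    rw [hgcd, mul_comm] at ha hb
    subst ha hb
    rw [lcm_mul_mul_of_coprime g hcop] at hlcm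
    refine ⟨(a, b), mem_coprimeFactorizations.mpr ⟨⟨?_, ?_⟩, hcop⟩, rfl⟩
    · exact Nat.eq_of_mul_eq_mul_left hg hlcm
    · exact right_ne_zero_of_mul hgc.ne'

theorem exists_eq_mul_of_dvd_of_dvd_sq {n w : ℕ} (hn : n ≠ 0) (hwn : w ∣ n) (hnw : n ∣ w ^ 2) :
    ∃ g c, 0 < g ∧ 0 < c ∧ w = g * c ∧ n = g * (g * c) := by
  obtain ⟨g, rfl⟩ := hwn
  obtain ⟨hw, hg⟩ := mul_ne_zero_iff.mp hn
  obtain ⟨c, rfl⟩ : g ∣ w := by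
    rw [sq] at hnw
    exact Nat.dvd_of_mul_dvd_mul_left (Nat.pos_of_ne_zero hw) hnw
  exact ⟨g, c, Nat.pos_of_ne_zero hg, Nat.pos_of_ne_zero (right_ne_zero_of_mul hw), rfl,
    mul_comm _ _⟩

theorem card_divisors_eq_sum_coprimeFactorizations (n : ℕ) :
    #n.divisors = ∑ w ∈ n.divisors with n ∣ w ^ 2, #(coprimeFactorizations (w ^ 2 / n)) := by
  have lcm_mem : ∀ p ∈ n.divisorsAntidiagonal,
      p.1.lcm p.2 ∈ ({w ∈ n.divisors | n ∣ w ^ 2} : Finset ℕ) := by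
    rintro ⟨d, e⟩ hde
    obtain ⟨rfl, hne⟩ := Nat.mem_divisorsAntidiagonal.mp hde
    rw [mem_filter, Nat.mem_divisors, sq]
    exact ⟨⟨Nat.lcm_dvd_mul d e, hne⟩, mul_dvd_mul (Nat.dvd_lcm_left d e) (Nat.dvd_lcm_right d e)⟩
  calc #n.divisors = #n.divisorsAntidiagonal := by rw [← Nat.map_div_right_divisors, card_map]
    _ = ∑ w ∈ n.divisors with n ∣ w ^ 2, #{p ∈ n.divisorsAntidiagonal | p.1.lcm p.2 = w} :=
      card_eq_sum_card_fiberwise lcm_mem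
    _ = ∑ w ∈ n.divisors with n ∣ w ^ 2, #(coprimeFactorizations (w ^ 2 / n)) := by
      refine sum_congr rfl fun w hw ↦ ?_
      rw [mem_filter, Nat.mem_divisors] at hw
      obtain ⟨g, c, hg, hc, rfl, rfl⟩ := exists_eq_mul_of_dvd_of_dvd_sq hw.1.2 hw.1.1 hw.2
      rw [card_divisorsAntidiagonal_lcm_eq hg,
        Nat.div_eq_of_eq_mul_left (k := c) (by positivity) (by ring)]

end FactorizationsByLcm

section ChineseRemainder

theorem existsUnique_mem_Icc_modEq {N : ℕ} (hN : 0 < N) (a : ℕ) :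
    ∃! z, z ∈ Icc 1 N ∧ z ≡ a [MOD N] := by
  have ha : a % N ∈ (Ico 1 (1 + N)).image (· % N) := by
    rw [Nat.image_Ico_mod, mem_range]
    exact Nat.mod_lt a hN
  obtain ⟨z, hz, hza⟩ := mem_image.mp ha
  rw [mem_Ico] at hz
  refine ⟨z, ⟨mem_Icc.mpr (by omega), hza⟩, ?_⟩
  rintro y ⟨hy, hya⟩
  rw [mem_Icc] at hy
  exact (hya.trans hza.symm).eq_of_abs_lt (by rw [abs_lt]; omega)

theorem exists_modEq_and_modEq_iff {m n : ℕ} (hmn : m.Coprime n) (a b : ℕ) :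
    ∃ x, ∀ z, z ≡ a [MOD m] ∧ z ≡ b [MOD n] ↔ z ≡ x [MOD m * n] := by
  obtain ⟨x, hxa, hxb⟩ := Nat.chineseRemainder hmn a b
  refine ⟨x, fun z ↦ ?_⟩
  rw [← Nat.modEq_and_modEq_iff_modEq_mul hmn]
  exact and_congr ⟨(·.trans hxa.symm), (·.trans hxa)⟩ ⟨(·.trans hxb.symm), (·.trans hxb)⟩

theorem two_mul_modEq_two_mul_iff {m : ℕ} (hm : Odd m) {x y : ℕ} :
    2 * x ≡ 2 * y [MOD m] ↔ x ≡ y [MOD m] :=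
  ⟨Nat.ModEq.cancel_left_of_coprime hm.coprime_two_right, Nat.ModEq.mul_left 2⟩

theorem dvd_two_mul_sub_one_iff_modEq {m z : ℕ} (hm : Odd m) (hz : 1 ≤ z) :
    m ∣ 2 * z - 1 ↔ z ≡ m / 2 + 1 [MOD m] := by
  have two_mul_half : 2 * (m / 2 + 1) = 1 + m := by
    rw [mul_add, add_comm 1, ← Nat.two_mul_div_two_add_one_of_odd hm]
    omega
  rw [← Nat.modEq_iff_dvd' (by omega), Nat.ModEq.comm,
    ← two_mul_modEq_two_mul_iff (y := m / 2 + 1) hm, two_mul_half, Nat.modEq_add_modulus_iff]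

theorem dvd_two_mul_add_one_iff_modEq {m : ℕ} (hm : Odd m) (z : ℕ) :
    m ∣ 2 * z + 1 ↔ z ≡ m / 2 [MOD m] := by
  have two_mul_half : 2 * (m / 2) + 1 ≡ 0 [MOD m] := by
    rw [Nat.two_mul_div_two_add_one_of_odd hm]
    exact Nat.modulus_modEq_zero
  rw [← Nat.modEq_zero_iff_dvd, ← two_mul_modEq_two_mul_iff (y := m / 2) hm,
    ← (Nat.ModEq.refl 1).add_iff_right (a := 2 * z)]
  exact ⟨(·.trans two_mul_half.symm), (·.trans two_mul_half)⟩

theorem existsUnique_dvd_two_mul_sub_one_dvd_two_mul_add_one {a b : ℕ} (ha : Odd a) (hb : Odd b)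
    (hab : a.Coprime b) (r : ℕ) :
    ∃! z, z ∈ Icc 1 (2 * (a * b)) ∧ z ≡ r [MOD 2] ∧ a ∣ 2 * z - 1 ∧ b ∣ 2 * z + 1 := by
  obtain ⟨x, hx⟩ := exists_modEq_and_modEq_iff hab (a / 2 + 1) (b / 2)
  obtain ⟨y, hy⟩ := exists_modEq_and_modEq_iff (ha.mul hb).coprime_two_left r x
  have dvd_iff (z : ℕ) (hz : z ∈ Icc 1 (2 * (a * b))) :
      z ≡ r [MOD 2] ∧ a ∣ 2 * z - 1 ∧ b ∣ 2 * z + 1 ↔ z ≡ y [MOD 2 * (a * b)] := by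
    rw [dvd_two_mul_sub_one_iff_modEq ha (mem_Icc.mp hz).1, dvd_two_mul_add_one_iff_modEq hb, hx,
      hy]
  simp only [and_congr_right (dvd_iff _)]
  exact existsUnique_mem_Icc_modEq (mul_pos two_pos (ha.mul hb).pos) y

end ChineseRemainder

section HalfUnitRoots

theorem coprime_two_mul_sub_one_two_mul_add_one {z : ℕ} (hz : 1 ≤ z) :
    (2 * z - 1).Coprime (2 * z + 1) := by
  rw [show 2 * z + 1 = 2 + (2 * z - 1) by omega, Nat.coprime_add_self_right,
    Nat.coprime_two_right]
  exact ⟨z - 1, by omega⟩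

theorem four_mul_sq_sub_one (z : ℕ) : 4 * z ^ 2 - 1 = (2 * z - 1) * (2 * z + 1) := by
  rw [show 4 * z ^ 2 - 1 = (2 * z) ^ 2 - 1 ^ 2 by ring_nf, Nat.sq_sub_sq, mul_comm]

theorem gcd_mul_gcd_of_dvd_four_mul_sq_sub_one {c z : ℕ} (hz : 1 ≤ z) (h : c ∣ 4 * z ^ 2 - 1) :
    c.gcd (2 * z - 1) * c.gcd (2 * z + 1) = c := by
  rw [← (coprime_two_mul_sub_one_two_mul_add_one hz).gcd_mul, ← four_mul_sq_sub_one,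
    Nat.gcd_eq_left h]

theorem gcd_mul_eq_of_dvd_two_mul_sub_one_of_dvd_two_mul_add_one {a b z : ℕ} (hz : 1 ≤ z)
    (ha : a ∣ 2 * z - 1) (hb : b ∣ 2 * z + 1) :
    (a * b).gcd (2 * z - 1) = a ∧ (a * b).gcd (2 * z + 1) = b := by
  have hcop := coprime_two_mul_sub_one_two_mul_add_one hz
  rw [(hcop.coprime_dvd_right hb).symm.gcd_mul_right_cancel,
    (hcop.coprime_dvd_left ha).gcd_mul_left_cancel]
  exact ⟨Nat.gcd_eq_left ha, Nat.gcd_eq_left hb⟩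

theorem mem_halfUnitRoots_and_gcd_eq_iff {a b r z : ℕ} :
    (z ∈ halfUnitRoots (a * b) r ∧
        (a * b).gcd (2 * z - 1) = a ∧ (a * b).gcd (2 * z + 1) = b) ↔
      z ∈ Icc 1 (2 * (a * b)) ∧ z ≡ r [MOD 2] ∧ a ∣ 2 * z - 1 ∧ b ∣ 2 * z + 1 := by
  rw [mem_halfUnitRoots]
  constructor
  · rintro ⟨⟨hz, hzr, -⟩, ha, hb⟩
    exact ⟨hz, hzr, ha.symm.dvd.trans (Nat.gcd_dvd_right _ _),
      hb.symm.dvd.trans (Nat.gcd_dvd_right _ _)⟩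
  · rintro ⟨hz, hzr, ha, hb⟩
    refine ⟨⟨hz, hzr, ?_⟩, gcd_mul_eq_of_dvd_two_mul_sub_one_of_dvd_two_mul_add_one
      (mem_Icc.mp hz).1 ha hb⟩
    rw [four_mul_sq_sub_one]
    exact mul_dvd_mul ha hb

theorem card_halfUnitRoots {c : ℕ} (hc : Odd c) (r : ℕ) :
    #(halfUnitRoots c r) = #(coprimeFactorizations c) := by
  let split (z : ℕ) : ℕ × ℕ := (c.gcd (2 * z - 1), c.gcd (2 * z + 1))
  have split_mem {z : ℕ} (hz : z ∈ halfUnitRoots c r) : split z ∈ coprimeFactorizations c := by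
    obtain ⟨hz, -, hdvd⟩ := mem_halfUnitRoots.mp hz
    have one_le_z := (mem_Icc.mp hz).1
    exact mem_coprimeFactorizations.mpr
      ⟨⟨gcd_mul_gcd_of_dvd_four_mul_sq_sub_one one_le_z hdvd, hc.pos.ne'⟩,
        (coprime_two_mul_sub_one_two_mul_add_one one_le_z).gcd_both c c⟩
  have existsUnique_split_eq {p : ℕ × ℕ} (hp : p ∈ coprimeFactorizations c) :
      ∃! z, z ∈ halfUnitRoots c r ∧ split z = p := by
    obtain ⟨a, b⟩ := p
    obtain ⟨⟨rfl, -⟩, hab⟩ := mem_coprimeFactorizations.mp hp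
    obtain ⟨ha, hb⟩ := Nat.odd_mul.mp hc
    simp only [split, Prod.mk.injEq, mem_halfUnitRoots_and_gcd_eq_iff]
    exact existsUnique_dvd_two_mul_sub_one_dvd_two_mul_add_one ha hb hab r
  refine card_nbij split (fun _ ↦ split_mem) (fun z hz z' hz' h ↦ ?_)
    fun p hp ↦ (existsUnique_split_eq hp).exists
  exact (existsUnique_split_eq (split_mem hz)).unique ⟨hz, rfl⟩ ⟨hz', h.symm⟩

end HalfUnitRoots

section Labels

theorem filter_divisors_two_mul_dvd_sq {n : ℕ} (hn : Odd n) :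
    {v ∈ (2 * n).divisors | 2 * n ∣ v ^ 2} = {w ∈ n.divisors | n ∣ w ^ 2}.image (2 * ·) := by
  have two_mul_dvd_sq_iff (w : ℕ) : 2 * n ∣ (2 * w) ^ 2 ↔ n ∣ w ^ 2 := by
    rw [show (2 * w) ^ 2 = 2 * (2 * w ^ 2) by ring, Nat.mul_dvd_mul_iff_left two_pos,
      hn.coprime_two_right.dvd_mul_left]
  have two_mul_mem_iff (w : ℕ) : 2 * w ∈ (2 * n).divisors ↔ w ∈ n.divisors := by
    simp [Nat.mul_dvd_mul_iff_left two_pos]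
  ext v
  simp only [mem_image, mem_filter]
  constructor
  · rintro ⟨hv, hsq⟩
    obtain ⟨w, rfl⟩ := Nat.prime_two.dvd_of_dvd_pow (dvd_of_mul_right_dvd hsq)
    exact ⟨w, ⟨(two_mul_mem_iff w).mp hv, (two_mul_dvd_sq_iff w).mp hsq⟩, rfl⟩
  · rintro ⟨w, ⟨hw, hsq⟩, rfl⟩
    exact ⟨(two_mul_mem_iff w).mpr hw, (two_mul_dvd_sq_iff w).mpr hsq⟩

/-- The values of the label `z` accompanying a given `v` at height `m = k + 2`, with the residue
of `k / 8` modulo `2` replaced by that of an arbitrary `r`. -/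
def labelsAt (m r v : ℕ) : Finset ℕ :=
  {z ∈ Icc 1 (v ^ 2 / m) | z ≡ r [MOD 2] ∧ v ^ 2 ∣ 2 * m * (4 * z ^ 2 - 1)}

theorem labelsAt_two_mul {n w : ℕ} (hn : n ≠ 0) (h : n ∣ w ^ 2) (r : ℕ) :
    labelsAt (2 * n) r (2 * w) = halfUnitRoots (w ^ 2 / n) r := by
  obtain ⟨c, hc⟩ := h
  have sq_eq : (2 * w) ^ 2 = 2 * n * (2 * c) := by rw [mul_pow, hc]; ring
  have dvd_iff (N : ℕ) : 2 * n * (2 * c) ∣ 2 * (2 * n) * N ↔ c ∣ N := by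
    rw [show 2 * n * (2 * c) = 2 * (2 * n) * c by ring, Nat.mul_dvd_mul_iff_left (by positivity)]
  rw [hc, Nat.mul_div_cancel_left c (by positivity), labelsAt, halfUnitRoots, sq_eq,
    Nat.mul_div_cancel_left _ (by positivity)]
  simp only [dvd_iff]

theorem sum_card_labelsAt {n : ℕ} (hn : Odd n) (r : ℕ) :
    ∑ v ∈ (2 * n).divisors with 2 * n ∣ v ^ 2, #(labelsAt (2 * n) r v) = #n.divisors := by
  rw [filter_divisors_two_mul_dvd_sq hn,
    sum_image fun _ _ _ _ h ↦ Nat.eq_of_mul_eq_mul_left two_pos h,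
    card_divisors_eq_sum_coprimeFactorizations]
  refine sum_congr rfl fun w hw ↦ ?_
  rw [mem_filter, Nat.mem_divisors] at hw
  obtain ⟨⟨hwn, hn0⟩, hnw⟩ := hw
  have odd_sq_div : Odd (w ^ 2 / n) := (hn.of_dvd_nat hwn).pow.of_dvd_nat (Nat.div_dvd_of_dvd hnw)
  rw [labelsAt_two_mul hn0 hnw, card_halfUnitRoots odd_sq_div]

theorem card_divisors_two_mul {n : ℕ} (hn : Odd n) : #(2 * n).divisors = 2 * #n.divisors := by
  rw [hn.coprime_two_left.card_divisors_mul, Nat.prime_two.divisors, card_pair (by decide)]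

/-- The quadruples `(v, z, x, y)` labelling the invariants `M^{4,1}` at height `m = k + 2`, with
the same arbitrary parity `r` of `z` as in `labelsAt`. -/
def labelQuadruples (m r : ℕ) : Finset (ℕ × ℕ × ℕ × ℕ) :=
  (({v ∈ m.divisors | m ∣ v ^ 2} : Finset ℕ).sigma fun v ↦
    labelsAt m r v ×ˢ {1, 3} ×ˢ {1, 3}).map (Equiv.sigmaEquivProd _ _).toEmbedding

theorem mem_labelQuadruples {m r v z x y : ℕ} :
    (v, z, x, y) ∈ labelQuadruples m r ↔
      ((v ∣ m ∧ m ≠ 0) ∧ m ∣ v ^ 2) ∧ z ∈ labelsAt m r v ∧ (x = 1 ∨ x = 3) ∧ (y = 1 ∨ y = 3) := by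
  simp only [labelQuadruples, mem_map_equiv, Equiv.sigmaEquivProd_symm_apply, mem_sigma,
    mem_filter, Nat.mem_divisors, mem_product, mem_insert, mem_singleton]

theorem card_labelQuadruples {n : ℕ} (hn : Odd n) (r : ℕ) :
    #(labelQuadruples (2 * n) r) = 2 * #(2 * n).divisors := by
  have card_xy : #(({1, 3} : Finset ℕ) ×ˢ ({1, 3} : Finset ℕ)) = 4 := rfl
  simp only [labelQuadruples, card_map, card_sigma, card_product _ (_ ×ˢ _), card_xy]
  rw [← sum_mul, sum_card_labelsAt hn, card_divisors_two_mul hn]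
  ring

end Labels

theorem count_M41_general (k r : ℕ) (hk : 4 ∣ k) :
    Nat.card {t : ℕ × ℕ × ℕ × ℕ //
        1 ≤ t.1 ∧ t.1 ≤ k + 2 ∧ t.1 ∣ (k + 2) ∧ (k + 2) ∣ t.1 ^ 2 ∧
        1 ≤ t.2.1 ∧ t.2.1 ≤ t.1 ^ 2 / (k + 2) ∧
        t.2.1 ≡ r [MOD 2] ∧
        t.1 ^ 2 ∣ 2 * (k + 2) * (4 * t.2.1 ^ 2 - 1) ∧
        (t.2.2.1 = 1 ∨ t.2.2.1 = 3) ∧ (t.2.2.2 = 1 ∨ t.2.2.2 = 3)}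
      = 2 * (k + 2).divisors.card := by
  obtain ⟨n, hn, hkn⟩ : ∃ n, Odd n ∧ k + 2 = 2 * n := by
    obtain ⟨j, rfl⟩ := hk
    exact ⟨2 * j + 1, odd_two_mul_add_one j, by ring⟩
  rw [Nat.subtype_card (labelQuadruples (k + 2) r), hkn, card_labelQuadruples hn]
  rintro ⟨v, z, x, y⟩
  have bounds_of_dvd (hv : v ∣ k + 2) : 1 ≤ v ∧ v ≤ k + 2 :=
    ⟨Nat.pos_of_dvd_of_pos hv (by positivity), Nat.le_of_dvd (by positivity) hv⟩
  rw [mem_labelQuadruples, labelsAt, mem_filter, mem_Icc]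
  grind

/-- for `8 ∣ k`, the number of quadruples `(v,z,x,y)` parametrising the
physical invariants `M^{4,1}[v,z,x,y]` equals `2·d(k̄)`. -/
theorem count_M41 (k : ℕ) (hk : 8 ∣ k) (hk0 : 0 < k) :
    Nat.card {t : ℕ × ℕ × ℕ × ℕ //
        1 ≤ t.1 ∧ t.1 ≤ k + 2 ∧ t.1 ∣ (k + 2) ∧ (k + 2) ∣ t.1 ^ 2 ∧
        1 ≤ t.2.1 ∧ t.2.1 ≤ t.1 ^ 2 / (k + 2) ∧
        t.2.1 ≡ k / 8 [MOD 2] ∧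
        t.1 ^ 2 ∣ 2 * (k + 2) * (4 * t.2.1 ^ 2 - 1) ∧
        (t.2.2.1 = 1 ∨ t.2.2.1 = 3) ∧ (t.2.2.2 = 1 ∨ t.2.2.2 = 3)}
      = 2 * (k + 2).divisors.card :=
  count_M41_general k (k / 8) (dvd_trans (by norm_num) hk)
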